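/- For every χ = (χ₊,χ₋) ∈ ℂ², the element Y := ( e₊(−iχ₊η₊)·e₊(−iqχ₋η₋) ) ⊗ h_χ of A_C, where h_χ(z₊,z₋) = exp(i(χ₊^p z₊ + χ₋^p z₋)), is a plane-wave eigenfunction: q^{−1/2}·(R_κ^{−1}∘R₊)(Y) = χ₊·Y and q^{−1/2}·(R_κ∘R₋)(Y) = χ₋·Y (these operators represent the elements p₊' = q^{−1/2}p₊κ^{−1} and p₋' = q^{−1/2}p₋κ of the quantum algebra U_q(e(1,1)) in the right regular representation). -/

import Mathlib

open scoped TensorProduct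

noncomputable section

/-- `q = exp(2πi/p)`, a primitive `p`-th root of unity. -/
def q (p : ℕ) : ℂ := Complex.exp (2 * Real.pi * Complex.I / p)

/-- `q^{1/2} = exp(iπ/p)`. -/
def qh (p : ℕ) : ℂ := Complex.exp (Real.pi * Complex.I / p)

/-- The balanced q-number `[k] = (q^k - q^{-k})/(q - q^{-1})`. -/
def qnum (p k : ℕ) : ℂ := (q p ^ k - (q p)⁻¹ ^ k) / (q p - (q p)⁻¹)

/-- The balanced q-factorial `[k]! = [1][2]⋯[k]`, with `[0]! = 1`. -/
def qfact (p k : ℕ) : ℂ := ∏ j ∈ Finset.range k, qnum p (j + 1)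

/-- Generators `η₊, η₋, δ` of the coordinate algebra of `E(1,1|p)`. -/
inductive Gen : Type
  | ep : Gen
  | em : Gen
  | d : Gen

open FreeAlgebra in
/-- The defining relations of `A(E(1,1|p))`: the two-sided ideal generated by
`η₋η₊ − q²η₊η₋`, `η₊δ − q²δη₊`, `η₋δ − q²δη₋`, `δ^p − 1`, `η₊^p`, `η₋^p`. -/
inductive ERel (p : ℕ) : FreeAlgebra ℂ Gen → FreeAlgebra ℂ Gen → Prop
  | commEta : ERel p (ι ℂ Gen.em * ι ℂ Gen.ep) ((q p ^ 2) • (ι ℂ Gen.ep * ι ℂ Gen.em))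
  | commEpD : ERel p (ι ℂ Gen.ep * ι ℂ Gen.d) ((q p ^ 2) • (ι ℂ Gen.d * ι ℂ Gen.ep))
  | commEmD : ERel p (ι ℂ Gen.em * ι ℂ Gen.d) ((q p ^ 2) • (ι ℂ Gen.d * ι ℂ Gen.em))
  | deltaPow : ERel p (ι ℂ Gen.d ^ p) 1
  | epPow : ERel p (ι ℂ Gen.ep ^ p) 0
  | emPow : ERel p (ι ℂ Gen.em ^ p) 0

/-- The coordinate algebra `A = A(E(1,1|p))` of the reduced quantum Poincaré group. -/
abbrev A (p : ℕ) : Type := RingQuot (ERel p)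

/-- `η₊ ∈ A`. -/
def ηp (p : ℕ) : A p := RingQuot.mkAlgHom ℂ (ERel p) (FreeAlgebra.ι ℂ Gen.ep)

/-- `η₋ ∈ A`. -/
def ηm (p : ℕ) : A p := RingQuot.mkAlgHom ℂ (ERel p) (FreeAlgebra.ι ℂ Gen.em)

/-- `δ ∈ A`. -/
def dl (p : ℕ) : A p := RingQuot.mkAlgHom ℂ (ERel p) (FreeAlgebra.ι ℂ Gen.d)

set_option synthInstance.maxHeartbeats 1000000
set_option maxHeartbeats 1000000

/-- The algebra `C^∞(ℝ², ℂ)` of smooth complex-valued functions on `ℝ²`. -/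
def Cinf : Subalgebra ℂ ((ℝ × ℝ) → ℂ) where
  carrier := {f | ContDiff ℝ (⊤ : ℕ∞) f}
  mul_mem' := fun {a b} (ha : ContDiff ℝ (⊤ : ℕ∞) a) (hb : ContDiff ℝ (⊤ : ℕ∞) b) =>
    ha.mul hb
  one_mem' := by
    change ContDiff ℝ (⊤ : ℕ∞) (fun _ => (1 : ℂ))
    exact contDiff_const
  add_mem' := fun {a b} (ha : ContDiff ℝ (⊤ : ℕ∞) a) (hb : ContDiff ℝ (⊤ : ℕ∞) b) =>
    ha.add hb
  zero_mem' := by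
    change ContDiff ℝ (⊤ : ℕ∞) (fun _ => (0 : ℂ))
    exact contDiff_const
  algebraMap_mem' c := by
    change ContDiff ℝ (⊤ : ℕ∞) (fun _ => c)
    exact contDiff_const

/-- `A_C = A ⊗ C^∞(ℝ², ℂ)`, the coordinate algebra of the quantum plane `E_q^{(1,1)}`
(without support restriction). -/
abbrev AC (p : ℕ) : Type := A p ⊗[ℂ] ↥Cinf

/-- The partial derivative `∂₊ = ∂/∂z₊` on `C^∞(ℝ², ℂ)`. -/
def dPlus (f : ↥Cinf) : ↥Cinf :=
  ⟨fun z => fderiv ℝ (f : (ℝ × ℝ) → ℂ) z (1, 0), by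
    have hf : ContDiff ℝ (⊤ : ℕ∞) (f : (ℝ × ℝ) → ℂ) := f.2
    exact (hf.fderiv_right (m := (⊤ : ℕ∞)) (by simp)).clm_apply contDiff_const⟩

/-- The partial derivative `∂₋ = ∂/∂z₋` on `C^∞(ℝ², ℂ)`. -/
def dMinus (f : ↥Cinf) : ↥Cinf :=
  ⟨fun z => fderiv ℝ (f : (ℝ × ℝ) → ℂ) z (0, 1), by
    have hf : ContDiff ℝ (⊤ : ℕ∞) (f : (ℝ × ℝ) → ℂ) := f.2
    exact (hf.fderiv_right (m := (⊤ : ℕ∞)) (by simp)).clm_apply contDiff_const⟩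

/-- The smooth function `exp(i(a z₊ + b z₋))` on `ℝ²`. -/
def expAB (a b : ℂ) : ↥Cinf :=
  ⟨fun z => Complex.exp (Complex.I * (a * z.1 + b * z.2)), by
    have h1 : ContDiff ℝ (⊤ : ℕ∞) (fun z : ℝ × ℝ => (z.1 : ℂ)) :=
      Complex.ofRealCLM.contDiff.comp contDiff_fst
    have h2 : ContDiff ℝ (⊤ : ℕ∞) (fun z : ℝ × ℝ => (z.2 : ℂ)) :=
      Complex.ofRealCLM.contDiff.comp contDiff_snd
    have h3 : ContDiff ℝ (⊤ : ℕ∞)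
        (fun z : ℝ × ℝ => Complex.I * (a * (z.1 : ℂ) + b * (z.2 : ℂ))) :=
      contDiff_const.mul ((contDiff_const.mul h1).add (contDiff_const.mul h2))
    exact h3.cexp⟩
/-- The cut-off q-exponential `e₊(x) = Σ_{m=0}^{p−1} (q^{m(m−1)/2}/[m]!) x^m`. -/
def qexp (p : ℕ) (x : A p) : A p :=
  ∑ m ∈ Finset.range p, (q p ^ (m * (m - 1) / 2) / qfact p m) • x ^ m

/-!
Composing a twisted derivation with an algebra homomorphism again gives a twisted derivation:
`q^{-1/2} R_κ⁻¹ R₊` is of type `(R_κ⁻², id)` and `q^{-1/2} R_κ R₋` of type `(id, R_κ²)`. Each maps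
its variable (`x = -iχ₊η₊`, respectively `x = -iqχ₋η₋`) to `χ`, and of the two twists one fixes `x`
while the other multiplies it by `r = q⁻²`. Such an operator `D` sends `xⁿ` to `χ (n)_r xⁿ⁻¹` with
`(n)_r = 1 + r + ⋯ + rⁿ⁻¹`. Since `(n)_r = q^{-(n-1)} [n]`, the cut-off `q`-exponential is
`e₊(x) = ∑_{m<p} xᵐ / (m)_r!`, so `D e₊(x)` is `χ e₊(x)` up to its missing top term
`χ xᵖ⁻¹ / (p-1)_r!`. This is exactly what `D` produces from the exponential function `h_χ`.
-/

section RSNumbers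

open Finset

/-- The two-parameter number `(rⁿ - sⁿ) / (r - s)`, written as a sum so that `r = s` is allowed;
it specializes to the balanced `q`-number at `(q, q⁻¹)` and to the Gaussian one at `(r, 1)`. -/
def rsNumber {K : Type*} [CommSemiring K] (r s : K) (n : ℕ) : K :=
  ∑ i ∈ range n, r ^ i * s ^ (n - 1 - i)

/-- The factorial `(1)(2)⋯(n)` of two-parameter numbers. -/
def rsFactorial {K : Type*} [CommSemiring K] (r s : K) (n : ℕ) : K :=
  ∏ j ∈ range n, rsNumber r s (j + 1)

section CommSemiring

variable {K : Type*} [CommSemiring K]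

theorem rsNumber_one (r s : K) : rsNumber r s 1 = 1 := by simp [rsNumber]

theorem rsNumber_comm (r s : K) (n : ℕ) : rsNumber r s n = rsNumber s r n :=
  geom_sum₂_comm r s n

theorem rsFactorial_comm (r s : K) (n : ℕ) : rsFactorial r s n = rsFactorial s r n :=
  prod_congr rfl fun _ _ => rsNumber_comm r s _

theorem rsFactorial_succ (r s : K) (n : ℕ) :
    rsFactorial r s (n + 1) = rsFactorial r s n * rsNumber r s (n + 1) :=
  prod_range_succ _ _

theorem rsNumber_mul_mul (t r s : K) (n : ℕ) :
    rsNumber (t * r) (t * s) (n + 1) = t ^ n * rsNumber r s (n + 1) := by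
  rw [rsNumber, rsNumber, mul_sum]
  refine sum_congr rfl fun i hi => ?_
  obtain ⟨k, rfl⟩ := Nat.exists_eq_add_of_le (mem_range_succ_iff.mp hi)
  rw [show i + k + 1 - 1 - i = k by omega]
  ring

theorem rsFactorial_mul_mul (t r s : K) (n : ℕ) :
    rsFactorial (t * r) (t * s) n = t ^ (n * (n - 1) / 2) * rsFactorial r s n := by
  rw [← sum_range_id, ← prod_pow_eq_pow_sum]
  simp only [rsFactorial, rsNumber_mul_mul, prod_mul_distrib]

end CommSemiring

section CommRing

variable {K : Type*} [CommRing K]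

theorem rsNumber_succ (r s : K) (n : ℕ) :
    rsNumber r s (n + 1) = r ^ n + s * rsNumber r s n :=
  geom_sum₂_succ_eq r s

theorem rsNumber_mul_sub (r s : K) (n : ℕ) : rsNumber r s n * (r - s) = r ^ n - s ^ n :=
  geom_sum₂_mul r s n

theorem rsFactorial_ne_zero [IsDomain K] {r : K} {k : ℕ} (hr : IsPrimitiveRoot r k) {n : ℕ}
    (hn : n < k) : rsFactorial r 1 n ≠ 0 := by
  refine prod_ne_zero_iff.mpr fun j hj hzero => ?_
  have hpow : r ^ (j + 1) = 1 := by
    simpa [hzero, sub_eq_zero, eq_comm (a := (0 : K))] using rsNumber_mul_sub r 1 (j + 1)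
  exact hr.pow_ne_one_of_pos_of_lt j.succ_ne_zero
    (Nat.lt_of_le_of_lt (mem_range.mp hj) hn) hpow

end CommRing

end RSNumbers

section RSExp

open Finset

variable {K B : Type*} [Field K] [Semiring B] [Algebra K B]

/-- The cut-off exponential `∑_{m<n} xᵐ / (m)!` built on two-parameter factorials. -/
def rsExp (r s : K) (n : ℕ) (x : B) : B :=
  ∑ m ∈ range n, (rsFactorial r s m)⁻¹ • x ^ m

theorem rsExp_comm (r s : K) (n : ℕ) (x : B) : rsExp r s n x = rsExp s r n x := by
  simp only [rsExp, rsFactorial_comm r s]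

theorem rsExp_succ (r s : K) (n : ℕ) (x : B) :
    rsExp r s (n + 1) x = rsExp r s n x + (rsFactorial r s n)⁻¹ • x ^ n :=
  sum_range_succ _ _

theorem map_rsExp {C : Type*} [Semiring C] [Algebra K C] (φ : B →ₐ[K] C) (r s : K) (n : ℕ) (x : B) :
    φ (rsExp r s n x) = rsExp r s n (φ x) := by
  simp only [rsExp, map_sum, map_smul, map_pow]

theorem semiconjBy_rsExp {a x y : B} (h : SemiconjBy a x y) (r s : K) (n : ℕ) :
    SemiconjBy a (rsExp r s n x) (rsExp r s n y) := by
  simp only [SemiconjBy, rsExp, mul_sum, sum_mul, mul_smul_comm, smul_mul_assoc,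
    (h.pow_right _).eq]

theorem rsExp_smul_mul_pow (r s t : K) {n : ℕ} {x : B} (hx : x ^ (n + 1) = 0) :
    rsExp r s (n + 1) (t • x) * x ^ n = x ^ n := by
  have hterm : ∀ m, x ^ (m + 1) * x ^ n = 0 := fun m => by
    rw [← pow_add, show m + 1 + n = m + (n + 1) by omega, pow_add, hx, mul_zero]
  simp [rsExp, sum_range_succ', add_mul, sum_mul, smul_pow, hterm, rsFactorial]

end RSExp

section TwistedDerivation

/-- `D` is an `(α, β)`-twisted derivation: `D (x y) = D x · β y + α x · D y`. -/
def IsTwistedDerivation {K B : Type*} [CommSemiring K] [Semiring B] [Algebra K B] (α β : B →ₐ[K] B)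
    (D : B →ₗ[K] B) : Prop :=
  ∀ x y, D (x * y) = D x * β y + α x * D y

namespace IsTwistedDerivation

section CommRing

variable {K B : Type*} [CommRing K] [Semiring B] [Algebra K B] {α β : B →ₐ[K] B} {D : B →ₗ[K] B}

theorem smul_comp (hD : IsTwistedDerivation α β D) (c : K) (φ : B →ₐ[K] B) :
    IsTwistedDerivation (φ.comp α) (φ.comp β) (c • φ.toLinearMap ∘ₗ D) := fun x y => by
  simp [hD x y, smul_add]

theorem map_one (hD : IsTwistedDerivation α β D) : D 1 = 0 := by
  let := Algebra.semiringToRing K (A := B)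
  simpa using hD 1 1

theorem map_pow_eq_zero (hD : IsTwistedDerivation α β D) {x : B} (hx : D x = 0) (n : ℕ) :
    D (x ^ n) = 0 := by
  induction n with
  | zero => simpa using hD.map_one
  | succ n ih => rw [pow_succ, hD, ih, hx, zero_mul, mul_zero, add_zero]

theorem map_pow_succ (hD : IsTwistedDerivation α β D) {x : B} {r s c : K} (hα : α x = r • x)
    (hβ : β x = s • x) (hx : D x = c • 1) (n : ℕ) :
    D (x ^ (n + 1)) = (c * rsNumber r s (n + 1)) • x ^ n := by
  induction n with
  | zero => simp [hx, rsNumber_one]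
  | succ n ih =>
    rw [pow_succ, hD, ih, hx, map_pow, hα, hβ, rsNumber_succ r s (n + 1)]
    simp only [smul_pow, smul_mul_assoc, mul_smul_comm, smul_smul, mul_one, ← pow_succ, ← add_smul]
    ring_nf

end CommRing

variable {K B : Type*} [Field K] [Semiring B] [Algebra K B] {α β : B →ₐ[K] B} {D : B →ₗ[K] B}

theorem map_rsExp_eq_zero (hD : IsTwistedDerivation α β D) {x : B} (hx : D x = 0) (r s : K)
    (n : ℕ) : D (rsExp r s n x) = 0 := by
  simp [rsExp, hD.map_pow_eq_zero hx]

theorem map_rsExp_succ (hD : IsTwistedDerivation α β D) {x : B} {r s c : K} (hα : α x = r • x)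
    (hβ : β x = s • x) (hx : D x = c • 1) {n : ℕ} (hn : rsFactorial r s n ≠ 0) :
    D (rsExp r s (n + 1) x) = c • rsExp r s n x := by
  induction n with
  | zero => simp [rsExp, hD.map_one]
  | succ n ih =>
    rw [rsFactorial_succ] at hn
    rw [rsExp_succ, map_add, ih (left_ne_zero_of_mul hn), map_smul, hD.map_pow_succ hα hβ hx,
      rsExp_succ r s n, smul_add, rsFactorial_succ, smul_smul, smul_smul]
    congr 2
    field_simp [left_ne_zero_of_mul hn, right_ne_zero_of_mul hn]

/-- The term missing from `D (rsExp r s n x)` is supplied by `D z`. -/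
theorem map_rsExp_mul (hD : IsTwistedDerivation α β D) {x z : B} {r s c : K} (hα : α x = r • x)
    (hβ : β x = s • x) (hx : D x = c • 1) {n : ℕ} (hn : n ≠ 0)
    (hfact : rsFactorial r s (n - 1) ≠ 0) (hnil : x ^ n = 0) (hβz : β z = z)
    (hz : D z = c • ((rsFactorial r s (n - 1))⁻¹ • x ^ (n - 1)) * z) :
    D (rsExp r s n x * z) = c • (rsExp r s n x * z) := by
  obtain ⟨k, rfl⟩ := Nat.exists_eq_succ_of_ne_zero hn
  rw [Nat.succ_sub_one] at hfact hz
  have hpow : α (rsExp r s (k + 1) x) * x ^ k = x ^ k := by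
    rw [map_rsExp, hα, rsExp_smul_mul_pow r s r hnil]
  calc D (rsExp r s (k + 1) x * z)
      = c • rsExp r s k x * z + c • ((rsFactorial r s k)⁻¹ • x ^ k) * z := by
        rw [hD, hD.map_rsExp_succ hα hβ hx hfact, hβz, hz, ← mul_assoc, mul_smul_comm,
          mul_smul_comm, hpow]
    _ = c • (rsExp r s (k + 1) x * z) := by
        rw [rsExp_succ r s k, ← add_mul, ← smul_add, smul_mul_assoc]

theorem map_rsExp_mul_of_map_eq_zero (hD : IsTwistedDerivation α β D) {y : B} (hy : D y = 0)
    (r s : K) (n : ℕ) (z : B) : D (rsExp r s n y * z) = rsExp r s n (α y) * D z := by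
  rw [hD, hD.map_rsExp_eq_zero hy, zero_mul, zero_add, map_rsExp]

end IsTwistedDerivation

end TwistedDerivation

section RootOfUnity

variable {p : ℕ}

theorem q_ne_zero (p : ℕ) : q p ≠ 0 := Complex.exp_ne_zero _

theorem qh_ne_zero (p : ℕ) : qh p ≠ 0 := Complex.exp_ne_zero _

theorem qh_sq (p : ℕ) : qh p ^ 2 = q p := by
  rw [qh, q, ← Complex.exp_nat_mul]
  congr 1
  push_cast
  ring

theorem isPrimitiveRoot_q (hp : p ≠ 0) : IsPrimitiveRoot (q p) p :=
  Complex.isPrimitiveRoot_exp p hp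

theorem isPrimitiveRoot_inv_q_sq (hp : Odd p) : IsPrimitiveRoot (q p ^ 2)⁻¹ p :=
  ((isPrimitiveRoot_q hp.pos.ne').pow_of_coprime 2 hp.coprime_two_left).inv

theorem q_ne_inv (hp : Odd p) (hp1 : 1 < p) : q p ≠ (q p)⁻¹ := by
  intro h
  refine (isPrimitiveRoot_inv_q_sq hp).ne_one hp1 (inv_eq_one.mpr ?_)
  rw [sq]
  nth_rw 1 [h]
  exact inv_mul_cancel₀ (q_ne_zero p)

theorem qnum_eq_rsNumber (hp : Odd p) (hp1 : 1 < p) (n : ℕ) :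
    qnum p n = rsNumber (q p) (q p)⁻¹ n := by
  rw [qnum, div_eq_iff (sub_ne_zero.mpr (q_ne_inv hp hp1)), rsNumber_mul_sub]

theorem qfact_eq_rsFactorial (hp : Odd p) (hp1 : 1 < p) (n : ℕ) :
    qfact p n = rsFactorial (q p) (q p)⁻¹ n :=
  Finset.prod_congr rfl fun _ _ => qnum_eq_rsNumber hp hp1 _

theorem inv_rsFactorial_inv_q_sq (hp : Odd p) (hp1 : 1 < p) (n : ℕ) :
    (rsFactorial (q p ^ 2)⁻¹ 1 n)⁻¹ = q p ^ (n * (n - 1) / 2) / qfact p n := by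
  have hscale := rsFactorial_mul_mul (q p)⁻¹ (q p)⁻¹ (q p) n
  rw [inv_mul_cancel₀ (q_ne_zero p), ← mul_inv, ← sq, rsFactorial_comm (q p)⁻¹,
    ← qfact_eq_rsFactorial hp hp1] at hscale
  rw [hscale, mul_inv, inv_pow, inv_inv, div_eq_mul_inv]

theorem qexp_eq_rsExp (hp : Odd p) (hp1 : 1 < p) (x : A p) :
    qexp p x = rsExp (q p ^ 2)⁻¹ 1 p x := by
  simp only [qexp, rsExp, inv_rsFactorial_inv_q_sq hp hp1]

theorem pow_pred_eq_inv {K : Type*} [DivisionRing K] {w : K} (hp : p ≠ 0) (hw : w ^ p = 1) :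
    w ^ (p - 1) = w⁻¹ :=
  eq_inv_of_mul_eq_one_left (by rw [pow_sub_one_mul hp, hw])

theorem inv_rsFactorial_pred (hp : Odd p) (hp1 : 1 < p) :
    (rsFactorial (q p ^ 2)⁻¹ 1 (p - 1))⁻¹ = q p / qfact p (p - 1) := by
  have hroot : q p ^ p = 1 := (isPrimitiveRoot_q hp.pos.ne').pow_eq_one
  have hexp : (p - 1) * (p - 1 - 1) / 2 = p * ((p - 3) / 2) + 1 := by
    obtain ⟨k, rfl⟩ : ∃ k, p = 2 * k + 3 := ⟨(p - 3) / 2, by obtain ⟨j, rfl⟩ := hp; omega⟩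
    rw [show 2 * k + 3 - 1 = 2 * (k + 1) by omega, show 2 * (k + 1) - 1 = 2 * k + 1 by omega,
      Nat.add_sub_cancel, mul_assoc, Nat.mul_div_cancel_left _ two_pos,
      Nat.mul_div_cancel_left _ two_pos]
    ring
  rw [inv_rsFactorial_inv_q_sq hp hp1, hexp, pow_succ, pow_mul, hroot, one_pow, one_mul]

theorem neg_I_pow_pred (hp : Odd p) : (-Complex.I) ^ (p - 1) = -(-1) ^ ((p + 1) / 2) := by
  obtain ⟨k, rfl⟩ := hp
  rw [show (2 * k + 1 + 1) / 2 = k + 1 by omega, Nat.add_sub_cancel, pow_mul]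
  simp [pow_succ]

end RootOfUnity

section Algebra

variable {K B : Type*} [Field K] [Semiring B] [Algebra K B]

theorem symm_apply_of_apply_eq_smul {σ : B ≃ₐ[K] B} {x : B} {r : K} (hr : r ≠ 0)
    (hx : σ x = r • x) : σ.symm x = r⁻¹ • x := by
  rw [AlgEquiv.symm_apply_eq, map_smul, hx, inv_smul_smul₀ hr]

theorem semiconjBy_pow_pred {x y : B} {r : K} {p : ℕ} (hp : p ≠ 0) (hr : r ^ p = 1)
    (hyx : y * x = r • (x * y)) : SemiconjBy (x ^ (p - 1)) y (r • y) := by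
  have hr0 : r ≠ 0 := fun h => by simp [h, hp] at hr
  have hpow : y * x ^ (p - 1) = r⁻¹ • (x ^ (p - 1) * y) := by
    have hsemi : SemiconjBy y x (r • x) := by rw [SemiconjBy, hyx, smul_mul_assoc]
    rw [(hsemi.pow_right (p - 1)).eq, smul_pow, pow_pred_eq_inv hp hr, smul_mul_assoc]
  rw [SemiconjBy, smul_mul_assoc, hpow, smul_inv_smul₀ hr0]

end Algebra

section PlaneWave

open Complex

variable {p : ℕ} {B : Type*} [Semiring B] [Algebra ℂ B]

/-- With `φ = R_κ⁻¹, w = 1` and with `φ = R_κ, w = q` this computes `p₊'` and `p₋'` on `h_χ`. -/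
theorem smul_comp_apply_eq_top_term (hp : Odd p) (hp1 : 1 < p) {φ : B →ₐ[ℂ] B} {R : B →ₗ[ℂ] B}
    {E h : B} (hE : φ E = (q p)⁻¹ • E) (hh : φ h = h) {w : ℂ} (hw : w ^ p = 1) {χ : ℂ}
    (hRh : R h = (I * (qh p * w⁻¹) * ((-1) ^ ((p + 1) / 2) / qfact p (p - 1))) •
      (E ^ (p - 1) * (I * χ ^ p) • h)) :
    ((qh p)⁻¹ • φ.toLinearMap ∘ₗ R) h =
      χ • ((rsFactorial (q p ^ 2)⁻¹ 1 (p - 1))⁻¹ • ((-I * w * χ) • E) ^ (p - 1)) * h := by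
  have hp0 : p ≠ 0 := by omega
  have hq : (q p)⁻¹ ^ (p - 1) = q p := by
    rw [inv_pow, pow_pred_eq_inv hp0 (isPrimitiveRoot_q hp0).pow_eq_one, inv_inv]
  simp only [LinearMap.smul_apply, LinearMap.comp_apply, AlgHom.toLinearMap_apply, hRh, map_smul,
    map_mul, map_pow, hE, hh, smul_pow, mul_smul_comm, smul_mul_assoc, smul_smul, hq,
    inv_rsFactorial_pred hp hp1, mul_pow, neg_I_pow_pred hp, pow_pred_eq_inv hp0 hw]
  rw [← mul_pow_sub_one hp0 χ]
  congr 1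
  field_simp [qh_ne_zero p]
  linear_combination (χ * χ ^ (p - 1) * q p * w⁻¹ * (qfact p (p - 1))⁻¹) * I_sq

theorem smul_comp_apply_generator {φ : B →ₐ[ℂ] B} {R : B →ₗ[ℂ] B} {E : B} {w : ℂ} (hw : w ≠ 0)
    (hRE : R E = (I * (qh p * w⁻¹)) • 1) (χ : ℂ) :
    ((qh p)⁻¹ • φ.toLinearMap ∘ₗ R) ((-I * w * χ) • E) = χ • 1 := by
  simp only [LinearMap.smul_apply, LinearMap.comp_apply, AlgHom.toLinearMap_apply, map_smul, hRE,
    map_one, smul_smul]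
  congr 1
  field_simp [qh_ne_zero p]
  linear_combination (-χ) * I_sq

variable {σ : B ≃ₐ[ℂ] B} {R : B →ₗ[ℂ] B} {E F h : B}

theorem inv_qh_smul_symm_apply_planeWave (hp : Odd p) (hp1 : 1 < p)
    (hR : IsTwistedDerivation (σ.symm : B →ₐ[ℂ] B) (σ : B →ₐ[ℂ] B) R)
    (hE : σ E = q p • E) (hF : σ F = (q p)⁻¹ • F) (hh : σ h = h)
    (hFE : F * E = q p ^ 2 • (E * F)) (hEp : E ^ p = 0)
    (hRE : R E = (I * qh p) • 1) (hRF : R F = 0) {χ : ℂ}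
    (hRh : R h = (I * qh p * ((-1) ^ ((p + 1) / 2) / qfact p (p - 1))) •
      (E ^ (p - 1) * (I * χ ^ p) • h)) (b : ℂ) :
    (qh p)⁻¹ • σ.symm (R (rsExp (q p ^ 2)⁻¹ 1 p ((-I * χ) • E) *
        (rsExp (q p ^ 2)⁻¹ 1 p (b • F) * h))) =
      χ • (rsExp (q p ^ 2)⁻¹ 1 p ((-I * χ) • E) * (rsExp (q p ^ 2)⁻¹ 1 p (b • F) * h)) := by
  have hp0 : p ≠ 0 := by omega
  have hE' : σ.symm E = (q p)⁻¹ • E := symm_apply_of_apply_eq_smul (q_ne_zero p) hE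
  have hF' : σ.symm F = q p • F := by
    simpa using symm_apply_of_apply_eq_smul (inv_ne_zero (q_ne_zero p)) hF
  have hh' : σ.symm h = h := by rw [AlgEquiv.symm_apply_eq, hh]
  have hD := hR.smul_comp (qh p)⁻¹ (σ.symm : B →ₐ[ℂ] B)
  have hcomm : SemiconjBy (((-I * χ) • E) ^ (p - 1)) (b • F) (q p ^ 2 • b • F) :=
    semiconjBy_pow_pred hp0 (by rw [pow_right_comm, (isPrimitiveRoot_q hp0).pow_eq_one, one_pow])
      (by simp only [smul_mul_assoc, mul_smul_comm, hFE, smul_smul]; ring_nf)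
  refine hD.map_rsExp_mul (r := (q p ^ 2)⁻¹) ?_ (s := 1) (by simp) ?_ hp0
    (rsFactorial_ne_zero (isPrimitiveRoot_inv_q_sq hp) (by omega))
    (by rw [smul_pow, hEp, smul_zero]) (by simp) ?_
  · simp [hE', smul_smul, sq, mul_comm]
  · simpa using smul_comp_apply_generator (φ := (σ.symm : B →ₐ[ℂ] B)) one_ne_zero
      (by simpa using hRE) χ
  · have htwist : (σ.symm : B →ₐ[ℂ] B).comp (σ.symm : B →ₐ[ℂ] B) (b • F) = q p ^ 2 • b • F := by
      simp [hF', smul_smul, sq, mul_comm]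
    have htop := smul_comp_apply_eq_top_term hp hp1 (φ := (σ.symm : B →ₐ[ℂ] B)) hE' hh'
      (one_pow p) (by simpa using hRh)
    rw [hD.map_rsExp_mul_of_map_eq_zero (by simp [hRF]), htwist, htop, mul_one, ← mul_assoc,
      ← mul_assoc, mul_smul_comm, mul_smul_comm, ← (semiconjBy_rsExp hcomm _ _ _).eq]
    simp only [smul_mul_assoc]

theorem inv_qh_smul_apply_planeWave (hp : Odd p) (hp1 : 1 < p)
    (hR : IsTwistedDerivation (σ.symm : B →ₐ[ℂ] B) (σ : B →ₐ[ℂ] B) R)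
    (hF : σ F = (q p)⁻¹ • F) (hh : σ h = h) (hFp : F ^ p = 0)
    (hRF : R F = (I * (qh p)⁻¹) • 1) (hRE : R E = 0) {χ : ℂ}
    (hRh : R h = (I * (qh p)⁻¹ * ((-1) ^ ((p + 1) / 2) / qfact p (p - 1))) •
      (F ^ (p - 1) * (I * χ ^ p) • h)) (a : ℂ) :
    (qh p)⁻¹ • σ (R (rsExp (q p ^ 2)⁻¹ 1 p (a • E) *
        (rsExp (q p ^ 2)⁻¹ 1 p ((-I * q p * χ) • F) * h))) =
      χ • (rsExp (q p ^ 2)⁻¹ 1 p (a • E) *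
        (rsExp (q p ^ 2)⁻¹ 1 p ((-I * q p * χ) • F) * h)) := by
  have hp0 : p ≠ 0 := by omega
  have hqh : (qh p)⁻¹ = qh p * (q p)⁻¹ := by
    rw [← qh_sq]
    field_simp [qh_ne_zero p]
  have hD := hR.smul_comp (qh p)⁻¹ (σ : B →ₐ[ℂ] B)
  rw [AlgEquiv.comp_symm] at hD
  rw [hqh] at hRF hRh
  have heigen : ((qh p)⁻¹ • (σ : B →ₐ[ℂ] B).toLinearMap ∘ₗ R)
      (rsExp (q p ^ 2)⁻¹ 1 p ((-I * q p * χ) • F) * h) =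
        χ • (rsExp (q p ^ 2)⁻¹ 1 p ((-I * q p * χ) • F) * h) := by
    rw [rsExp_comm]
    refine hD.map_rsExp_mul (r := 1) (by simp) ?_
      (smul_comp_apply_generator (q_ne_zero p) hRF χ) hp0 ?_
      (by rw [smul_pow, hFp, smul_zero]) (by simp [hh]) ?_
    · simp [hF, smul_smul, sq, mul_comm]
    · rw [rsFactorial_comm]
      exact rsFactorial_ne_zero (isPrimitiveRoot_inv_q_sq hp) (by omega)
    · rw [rsFactorial_comm]
      exact smul_comp_apply_eq_top_term hp hp1 hF hh (isPrimitiveRoot_q hp0).pow_eq_one hRh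
  have hpass := hD.map_rsExp_mul_of_map_eq_zero (y := a • E) (by simp [hRE]) (q p ^ 2)⁻¹ 1 p
    (rsExp (q p ^ 2)⁻¹ 1 p ((-I * q p * χ) • F) * h)
  rw [heigen, AlgHom.id_apply, mul_smul_comm] at hpass
  exact hpass

end PlaneWave

section QuantumPlane

theorem ηm_mul_ηp (p : ℕ) : ηm p * ηp p = q p ^ 2 • (ηp p * ηm p) := by
  have hrel := RingQuot.mkAlgHom_rel ℂ (ERel.commEta (p := p))
  simp only [map_mul, map_smul] at hrel
  exact hrel

theorem ηp_pow (p : ℕ) : ηp p ^ p = 0 := by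
  have hrel := RingQuot.mkAlgHom_rel ℂ (ERel.epPow (p := p))
  simp only [map_pow, map_zero] at hrel
  exact hrel

theorem ηm_pow (p : ℕ) : ηm p ^ p = 0 := by
  have hrel := RingQuot.mkAlgHom_rel ℂ (ERel.emPow (p := p))
  simp only [map_pow, map_zero] at hrel
  exact hrel

theorem hasFDerivAt_expAB (a b : ℂ) (z : ℝ × ℝ) :
    HasFDerivAt (expAB a b : ℝ × ℝ → ℂ)
      ((expAB a b : ℝ × ℝ → ℂ) z • (Complex.I •
        (a • (Complex.ofRealCLM ∘L ContinuousLinearMap.fst ℝ ℝ ℝ) +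
          b • (Complex.ofRealCLM ∘L ContinuousLinearMap.snd ℝ ℝ ℝ)))) z := by
  have hfst := (Complex.ofRealCLM ∘L ContinuousLinearMap.fst ℝ ℝ ℝ).hasFDerivAt (x := z)
  have hsnd := (Complex.ofRealCLM ∘L ContinuousLinearMap.snd ℝ ℝ ℝ).hasFDerivAt (x := z)
  exact (((hfst.const_mul a).add (hsnd.const_mul b)).const_mul Complex.I).cexp

theorem dPlus_expAB (a b : ℂ) : dPlus (expAB a b) = (Complex.I * a) • expAB a b := by
  ext z
  change fderiv ℝ (expAB a b : ℝ × ℝ → ℂ) z (1, 0) = (Complex.I * a) * (expAB a b : ℝ × ℝ → ℂ) z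
  rw [(hasFDerivAt_expAB a b z).fderiv]
  simp [mul_comm]

theorem dMinus_expAB (a b : ℂ) : dMinus (expAB a b) = (Complex.I * b) • expAB a b := by
  ext z
  change fderiv ℝ (expAB a b : ℝ × ℝ → ℂ) z (0, 1) = (Complex.I * b) * (expAB a b : ℝ × ℝ → ℂ) z
  rw [(hasFDerivAt_expAB a b z).fderiv]
  simp [mul_comm]

variable {p : ℕ}

theorem pow_tmul_smul (x : A p) (n : ℕ) (c : ℂ) (f : Cinf) :
    (x ^ n) ⊗ₜ[ℂ] (c • f) = (x ⊗ₜ[ℂ] (1 : Cinf)) ^ n * c • ((1 : A p) ⊗ₜ[ℂ] f) := by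
  rw [Algebra.TensorProduct.tmul_pow, one_pow, mul_smul_comm,
    Algebra.TensorProduct.tmul_mul_tmul, mul_one, one_mul, TensorProduct.tmul_smul]

theorem qexp_smul_tmul_one (hp : Odd p) (hp1 : 1 < p) (a : ℂ) (x : A p) :
    qexp p (a • x) ⊗ₜ[ℂ] (1 : Cinf) = rsExp (q p ^ 2)⁻¹ 1 p (a • (x ⊗ₜ[ℂ] (1 : Cinf))) := by
  rw [qexp_eq_rsExp hp hp1]
  exact map_rsExp Algebra.TensorProduct.includeLeft _ _ _ _

theorem qexp_mul_qexp_tmul (hp : Odd p) (hp1 : 1 < p) (a b : ℂ) (x y : A p) (f : Cinf) :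
    (qexp p (a • x) * qexp p (b • y)) ⊗ₜ[ℂ] f =
      rsExp (q p ^ 2)⁻¹ 1 p (a • (x ⊗ₜ[ℂ] (1 : Cinf))) *
        (rsExp (q p ^ 2)⁻¹ 1 p (b • (y ⊗ₜ[ℂ] (1 : Cinf))) * (1 : A p) ⊗ₜ[ℂ] f) := by
  simp only [← qexp_smul_tmul_one hp hp1, Algebra.TensorProduct.tmul_mul_tmul, one_mul, mul_one]

theorem ηm_tmul_one_mul_ηp_tmul_one (p : ℕ) :
    (ηm p ⊗ₜ[ℂ] (1 : Cinf)) * (ηp p ⊗ₜ[ℂ] (1 : Cinf)) =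
      q p ^ 2 • ((ηp p ⊗ₜ[ℂ] (1 : Cinf)) * (ηm p ⊗ₜ[ℂ] (1 : Cinf))) := by
  rw [Algebra.TensorProduct.tmul_mul_tmul, Algebra.TensorProduct.tmul_mul_tmul, ηm_mul_ηp,
    TensorProduct.smul_tmul']

theorem tmul_one_pow_eq_zero {x : A p} {n : ℕ} (hx : x ^ n = 0) :
    (x ⊗ₜ[ℂ] (1 : Cinf)) ^ n = 0 := by
  rw [Algebra.TensorProduct.tmul_pow, hx, TensorProduct.zero_tmul]

end QuantumPlane

/-- The plane waves `Y = (e₊(−iχ₊η₊)e₊(−iqχ₋η₋))⊗h_χ` are eigenfunctions of the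
operators representing `p₊' = q^{−1/2}p₊κ⁻¹` and `p₋' = q^{−1/2}p₋κ` in the right
regular representation. -/
theorem statement14 (p : ℕ) (hp : Odd p) (hp3 : 3 ≤ p)
    (RK : AC p ≃ₐ[ℂ] AC p)
    (hK1 : RK (ηp p ⊗ₜ[ℂ] (1 : ↥Cinf)) = q p • (ηp p ⊗ₜ[ℂ] (1 : ↥Cinf)))
    (hK2 : RK (ηm p ⊗ₜ[ℂ] (1 : ↥Cinf)) = (q p)⁻¹ • (ηm p ⊗ₜ[ℂ] (1 : ↥Cinf)))
    (hK3 : RK (dl p ⊗ₜ[ℂ] (1 : ↥Cinf)) = q p • (dl p ⊗ₜ[ℂ] (1 : ↥Cinf)))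
    (hK4 : ∀ f : ↥Cinf, RK ((1 : A p) ⊗ₜ[ℂ] f) = (1 : A p) ⊗ₜ[ℂ] f)
    (Rp Rm : AC p →ₗ[ℂ] AC p)
    (hp1 : Rp (ηp p ⊗ₜ[ℂ] (1 : ↥Cinf)) = (Complex.I * qh p) • (1 : AC p))
    (hp2 : Rp (ηm p ⊗ₜ[ℂ] (1 : ↥Cinf)) = 0)
    (hp3' : Rp (dl p ⊗ₜ[ℂ] (1 : ↥Cinf)) = 0)
    (hp4 : ∀ f : ↥Cinf, Rp ((1 : A p) ⊗ₜ[ℂ] f) =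
      (Complex.I * qh p * ((-1 : ℂ) ^ ((p + 1) / 2) / qfact p (p - 1))) •
        ((ηp p ^ (p - 1)) ⊗ₜ[ℂ] dPlus f))
    (hp5 : ∀ X Y : AC p, Rp (X * Y) = Rp X * RK Y + RK.symm X * Rp Y)
    (hm1 : Rm (ηm p ⊗ₜ[ℂ] (1 : ↥Cinf)) = (Complex.I * (qh p)⁻¹) • (1 : AC p))
    (hm2 : Rm (ηp p ⊗ₜ[ℂ] (1 : ↥Cinf)) = 0)
    (hm3 : Rm (dl p ⊗ₜ[ℂ] (1 : ↥Cinf)) = 0)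
    (hm4 : ∀ f : ↥Cinf, Rm ((1 : A p) ⊗ₜ[ℂ] f) =
      (Complex.I * (qh p)⁻¹ * ((-1 : ℂ) ^ ((p + 1) / 2) / qfact p (p - 1))) •
        ((ηm p ^ (p - 1)) ⊗ₜ[ℂ] dMinus f))
    (hm5 : ∀ X Y : AC p, Rm (X * Y) = Rm X * RK Y + RK.symm X * Rm Y)
    (cp cm : ℂ) :
    (qh p)⁻¹ • RK.symm (Rp
        ((qexp p ((-Complex.I * cp) • ηp p) * qexp p ((-Complex.I * q p * cm) • ηm p))
          ⊗ₜ[ℂ] expAB (cp ^ p) (cm ^ p))) =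
      cp • ((qexp p ((-Complex.I * cp) • ηp p) * qexp p ((-Complex.I * q p * cm) • ηm p))
          ⊗ₜ[ℂ] expAB (cp ^ p) (cm ^ p)) ∧
    (qh p)⁻¹ • RK (Rm
        ((qexp p ((-Complex.I * cp) • ηp p) * qexp p ((-Complex.I * q p * cm) • ηm p))
          ⊗ₜ[ℂ] expAB (cp ^ p) (cm ^ p))) =
      cm • ((qexp p ((-Complex.I * cp) • ηp p) * qexp p ((-Complex.I * q p * cm) • ηm p))
          ⊗ₜ[ℂ] expAB (cp ^ p) (cm ^ p)) := by
  have one_lt_p : 1 < p := by omega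
  rw [qexp_mul_qexp_tmul hp one_lt_p]
  constructor
  · exact inv_qh_smul_symm_apply_planeWave hp one_lt_p hp5 hK1 hK2 (hK4 _)
      (ηm_tmul_one_mul_ηp_tmul_one p) (tmul_one_pow_eq_zero (ηp_pow p)) hp1 hp2
      (by rw [hp4, dPlus_expAB, pow_tmul_smul]) _
  · exact inv_qh_smul_apply_planeWave hp one_lt_p hm5 hK2 (hK4 _)
      (tmul_one_pow_eq_zero (ηm_pow p)) hm1 hm2
      (by rw [hm4, dMinus_expAB, pow_tmul_smul]) _
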